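/- arXiv:2601.02079 — 2 statements merged into one kernel-verified Lean document; each statement's English description precedes it below -/
import Mathlib

section
/- Let V, W ∈ (0,1). Then: (i) for every x ∈ ℝ, f^min_{VW}(x) ≤ M, where M = (1+V)/(1+W) if V ≤ W and M = (1−V)/(1−W) if V ≥ W, with equality if and only if x is an odd multiple of π; (ii) for every x ∈ ℝ, f^min_{VW}(x) ≥ (1−V)/(1+W), with equality if and only if x is an even multiple of π. In particular sup_{x∈ℝ} f^min_{VW}(x) = M and inf_{x∈ℝ} f^min_{VW}(x) = (1−V)/(1+W). -/
/-- For parameters `V, W ∈ [0,1)`, the function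
`f_{VW}(α, x) = (1 + V·cos(x + α))/(1 − W·cos α)`. -/
noncomputable def fVW (V W α x : ℝ) : ℝ :=
    (1 + V * Real.cos (x + α)) / (1 - W * Real.cos α)

/-- `f^min_{VW}(x) = inf_{α ∈ ℝ} f_{VW}(α, x)`. -/
noncomputable def fVWmin (V W x : ℝ) : ℝ := ⨅ α : ℝ, fVW V W α x

/-!
The gap `f_{VW}(α, x) - (1 - V) / (1 + W)` is a positive combination of `1 + cos (x + α)` and
`1 + cos α` over a positive denominator, so the lower bound is attained only when both vanish,
which forces `cos x = 1`. For the upper bound, test the infimum at `α = π`, where the denominator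
is largest, and at `α = π - x`, where the numerator is smallest. When `cos x = -1` the numerator
becomes `1 - V * cos α`, so `f_{VW}(α, x)` is a weighted mediant of `(1 + V) / (1 + W)` and
`(1 - V) / (1 - W)`, the values at `cos α = -1` and `cos α = 1`, and hence at least the smaller
of the two.
-/

section

open Real Set

variable {V W x : ℝ}

lemma cos_eq_neg_one_iff_exists_odd : cos x = -1 ↔ ∃ k : ℤ, x = (2 * k + 1) * π := by
  rw [cos_eq_neg_one_iff]
  exact exists_congr fun k => ⟨fun h => by linarith, fun h => by linarith⟩

lemma cos_eq_one_iff_exists_even : cos x = 1 ↔ ∃ k : ℤ, x = 2 * k * π := by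
  rw [cos_eq_one_iff]
  exact exists_congr fun k => ⟨fun h => by linarith, fun h => by linarith⟩

lemma cos_eq_one_of_cos_add_eq_neg_one {α : ℝ} (hα : cos α = -1) (hx : cos (x + α) = -1) :
    cos x = 1 := by
  have hsin : sin α = 0 := sin_eq_zero_iff_cos_eq.2 (Or.inr hα)
  rw [cos_add, hα, hsin] at hx
  linarith

lemma abs_lt_one_of_mem_Ico (hW : W ∈ Ico (0 : ℝ) 1) : |W| < 1 :=
  (abs_of_nonneg hW.1).trans_lt hW.2

lemma one_sub_mul_pos {c : ℝ} (hW : |W| < 1) (hc : |c| ≤ 1) : 0 < 1 - W * c := by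
  have : |W * c| < 1 := by
    rw [abs_mul]
    exact (mul_le_of_le_one_right (abs_nonneg W) hc).trans_lt hW
  exact sub_pos.2 (abs_lt.1 this).2

lemma one_sub_mul_cos_pos (hW : |W| < 1) (α : ℝ) : 0 < 1 - W * cos α :=
  one_sub_mul_pos hW (abs_cos_le_one α)

lemma one_add_div_le_one_sub_div_iff (hW : |W| < 1) :
    (1 + V) / (1 + W) ≤ (1 - V) / (1 - W) ↔ V ≤ W := by
  obtain ⟨hW₀, hW₁⟩ := abs_lt.1 hW
  rw [div_le_div_iff₀ (by linarith) (by linarith)]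
  constructor <;> intro h <;> linarith

lemma ite_le_eq_min_div (hW : |W| < 1) :
    (if V ≤ W then (1 + V) / (1 + W) else (1 - V) / (1 - W)) =
      min ((1 + V) / (1 + W)) ((1 - V) / (1 - W)) := by
  simp only [min_def, one_add_div_le_one_sub_div_iff hW]

lemma min_div_le_one_sub_mul_div {c : ℝ} (hW : |W| < 1) (hc : |c| ≤ 1) :
    min ((1 + V) / (1 + W)) ((1 - V) / (1 - W)) ≤ (1 - V * c) / (1 - W * c) := by
  obtain ⟨hW₀, hW₁⟩ := abs_lt.1 hW
  set m := min ((1 + V) / (1 + W)) ((1 - V) / (1 - W))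
  have h_add : m * (1 + W) ≤ 1 + V := (le_div_iff₀ (by linarith)).1 (min_le_left _ _)
  have h_sub : m * (1 - W) ≤ 1 - V := (le_div_iff₀ (by linarith)).1 (min_le_right _ _)
  obtain ⟨hc₀, hc₁⟩ := abs_le.1 hc
  rw [le_div_iff₀ (one_sub_mul_pos hW hc)]
  calc m * (1 - W * c)
      = (1 - c) / 2 * (m * (1 + W)) + (1 + c) / 2 * (m * (1 - W)) := by ring
    _ ≤ (1 - c) / 2 * (1 + V) + (1 + c) / 2 * (1 - V) :=
        add_le_add (mul_le_mul_of_nonneg_left h_add (by linarith))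
          (mul_le_mul_of_nonneg_left h_sub (by linarith))
    _ = 1 - V * c := by ring

lemma fVW_pi : fVW V W π x = (1 - V * cos x) / (1 + W) := by
  simp only [fVW, cos_add_pi, cos_pi, mul_neg, mul_one, sub_neg_eq_add, ← sub_eq_add_neg]

lemma fVW_pi_sub : fVW V W (π - x) x = (1 - V) / (1 + W * cos x) := by
  simp only [fVW, add_sub_cancel, cos_pi_sub, cos_pi, mul_neg, mul_one, sub_neg_eq_add,
    ← sub_eq_add_neg]

lemma fVW_of_cos_eq_neg_one (hx : cos x = -1) (α : ℝ) :
    fVW V W α x = (1 - V * cos α) / (1 - W * cos α) := by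
  have hsin : sin x = 0 := sin_eq_zero_iff_cos_eq.2 (Or.inr hx)
  simp only [fVW, cos_add, hx, hsin]
  ring

lemma continuous_fVW (hW : |W| < 1) (x : ℝ) : Continuous fun α => fVW V W α x :=
  Continuous.div (by fun_prop) (by fun_prop) fun α => (one_sub_mul_cos_pos hW α).ne'

lemma periodic_fVW (V W x : ℝ) : Function.Periodic (fun α => fVW V W α x) (2 * π) := fun α => by
  simp only [fVW, ← add_assoc, cos_add_two_pi]

lemma isLeast_range_fVW (hW : |W| < 1) (x : ℝ) :
    IsLeast (range fun α => fVW V W α x) (fVWmin V W x) :=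
  ((periodic_fVW V W x).compact_of_continuous two_pi_pos.ne' (continuous_fVW hW x)).isLeast_sInf
    (range_nonempty _)

lemma fVWmin_le_fVW (hW : |W| < 1) (α x : ℝ) : fVWmin V W x ≤ fVW V W α x :=
  (isLeast_range_fVW hW x).2 (mem_range_self α)

lemma fVW_sub_one_sub_div_one_add (hW : |W| < 1) (α x : ℝ) :
    fVW V W α x - (1 - V) / (1 + W) =
      (V * (1 + W) * (1 + cos (x + α)) + (1 - V) * W * (1 + cos α)) /
        ((1 - W * cos α) * (1 + W)) := by
  have h_den := one_sub_mul_cos_pos hW α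
  have h_add : 1 + W ≠ 0 := by linarith [(abs_lt.1 hW).1]
  rw [fVW, div_sub_div _ _ h_den.ne' h_add]
  ring

lemma one_sub_div_one_add_le_fVW (hV : V ∈ Icc (0 : ℝ) 1) (hW : W ∈ Ico (0 : ℝ) 1) (α x : ℝ) :
    (1 - V) / (1 + W) ≤ fVW V W α x := by
  have hW' := abs_lt_one_of_mem_Ico hW
  obtain ⟨hV₀, hV₁⟩ := hV
  obtain ⟨hW₀, -⟩ := hW
  have hxα : 0 ≤ 1 + cos (x + α) := by linarith [neg_one_le_cos (x + α)]
  have hα : 0 ≤ 1 + cos α := by linarith [neg_one_le_cos α]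
  have h_coeff_xα : 0 ≤ V * (1 + W) := by positivity
  have h_coeff_α : 0 ≤ (1 - V) * W := mul_nonneg (sub_nonneg.2 hV₁) hW₀
  have h_den : 0 ≤ (1 - W * cos α) * (1 + W) :=
    mul_nonneg (one_sub_mul_cos_pos hW' α).le (by positivity)
  rw [← sub_nonneg, fVW_sub_one_sub_div_one_add hW']
  exact div_nonneg (add_nonneg (mul_nonneg h_coeff_xα hxα) (mul_nonneg h_coeff_α hα)) h_den

lemma fVW_eq_one_sub_div_one_add_iff (hV : V ∈ Ioo (0 : ℝ) 1) (hW : W ∈ Ioo (0 : ℝ) 1) (α x : ℝ) :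
    fVW V W α x = (1 - V) / (1 + W) ↔ cos (x + α) = -1 ∧ cos α = -1 := by
  have hW' := abs_lt_one_of_mem_Ico (Ioo_subset_Ico_self hW)
  obtain ⟨hV₀, hV₁⟩ := hV
  obtain ⟨hW₀, -⟩ := hW
  have hxα : 0 ≤ 1 + cos (x + α) := by linarith [neg_one_le_cos (x + α)]
  have hα : 0 ≤ 1 + cos α := by linarith [neg_one_le_cos α]
  have h_coeff_xα : 0 < V * (1 + W) := by positivity
  have h_coeff_α : 0 < (1 - V) * W := mul_pos (sub_pos.2 hV₁) hW₀
  have h_den : 0 < (1 - W * cos α) * (1 + W) :=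
    mul_pos (one_sub_mul_cos_pos hW' α) (by positivity)
  rw [← sub_eq_zero, fVW_sub_one_sub_div_one_add hW', div_eq_zero_iff, or_iff_left h_den.ne',
    add_eq_zero_iff_of_nonneg (mul_nonneg h_coeff_xα.le hxα) (mul_nonneg h_coeff_α.le hα),
    mul_eq_zero_iff_left h_coeff_xα.ne', mul_eq_zero_iff_left h_coeff_α.ne',
    add_eq_zero_iff_neg_eq', add_eq_zero_iff_neg_eq', neg_eq_iff_eq_neg, neg_eq_iff_eq_neg]

lemma one_sub_div_one_add_le_fVWmin (hV : V ∈ Icc (0 : ℝ) 1) (hW : W ∈ Ico (0 : ℝ) 1) (x : ℝ) :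
    (1 - V) / (1 + W) ≤ fVWmin V W x :=
  le_ciInf fun α => one_sub_div_one_add_le_fVW hV hW α x

lemma fVWmin_of_cos_eq_one (hV : V ∈ Icc (0 : ℝ) 1) (hW : W ∈ Ico (0 : ℝ) 1) (hx : cos x = 1) :
    fVWmin V W x = (1 - V) / (1 + W) := by
  refine le_antisymm ?_ (one_sub_div_one_add_le_fVWmin hV hW x)
  simpa only [fVW_pi, hx, mul_one] using fVWmin_le_fVW (V := V) (abs_lt_one_of_mem_Ico hW) π x

lemma fVWmin_eq_one_sub_div_one_add_iff (hV : V ∈ Ioo (0 : ℝ) 1) (hW : W ∈ Ioo (0 : ℝ) 1) :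
    fVWmin V W x = (1 - V) / (1 + W) ↔ cos x = 1 := by
  have hW' := Ioo_subset_Ico_self hW
  refine ⟨fun h => ?_, fVWmin_of_cos_eq_one (Ioo_subset_Icc_self hV) hW'⟩
  obtain ⟨α, hα⟩ := (isLeast_range_fVW (V := V) (abs_lt_one_of_mem_Ico hW') x).1
  obtain ⟨hxα, hα⟩ := (fVW_eq_one_sub_div_one_add_iff hV hW α x).1 (hα.trans h)
  exact cos_eq_one_of_cos_add_eq_neg_one hα hxα

lemma fVWmin_le_min_cos (hW : |W| < 1) (x : ℝ) :
    fVWmin V W x ≤ min ((1 - V * cos x) / (1 + W)) ((1 - V) / (1 + W * cos x)) :=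
  le_min ((fVWmin_le_fVW hW π x).trans_eq fVW_pi)
    ((fVWmin_le_fVW hW (π - x) x).trans_eq fVW_pi_sub)

lemma fVWmin_le_min (hV : V ∈ Icc (0 : ℝ) 1) (hW : W ∈ Ico (0 : ℝ) 1) (x : ℝ) :
    fVWmin V W x ≤ min ((1 + V) / (1 + W)) ((1 - V) / (1 - W)) := by
  obtain ⟨hV₀, hV₁⟩ := hV
  refine (fVWmin_le_min_cos (abs_lt_one_of_mem_Ico hW) x).trans ?_
  obtain ⟨hW₀, hW₁⟩ := hW
  have hVx : 1 - V * cos x ≤ 1 + V := by nlinarith [neg_one_le_cos x]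
  have hWx : 1 - W ≤ 1 + W * cos x := by nlinarith [neg_one_le_cos x]
  exact min_le_min (div_le_div_of_nonneg_right hVx (by linarith))
    (div_le_div_of_nonneg_left (sub_nonneg.2 hV₁) (sub_pos.2 hW₁) hWx)

lemma fVWmin_lt_min (hV : V ∈ Ioo (0 : ℝ) 1) (hW : W ∈ Ioo (0 : ℝ) 1) (hx : cos x ≠ -1) :
    fVWmin V W x < min ((1 + V) / (1 + W)) ((1 - V) / (1 - W)) := by
  have hx' : -1 < cos x := (neg_one_le_cos x).lt_of_ne' hx
  obtain ⟨hV₀, hV₁⟩ := hV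
  refine (fVWmin_le_min_cos (abs_lt_one_of_mem_Ico (Ioo_subset_Ico_self hW)) x).trans_lt ?_
  obtain ⟨hW₀, hW₁⟩ := hW
  have hVx : 1 - V * cos x < 1 + V := by nlinarith
  have hWx : 1 - W < 1 + W * cos x := by nlinarith
  exact min_lt_min (div_lt_div_of_pos_right hVx (by linarith))
    (div_lt_div_of_pos_left (sub_pos.2 hV₁) (sub_pos.2 hW₁) hWx)

lemma fVWmin_of_cos_eq_neg_one (hW : |W| < 1) (hx : cos x = -1) :
    fVWmin V W x = min ((1 + V) / (1 + W)) ((1 - V) / (1 - W)) := by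
  apply le_antisymm
  · simpa only [hx, mul_neg, mul_one, sub_neg_eq_add, ← sub_eq_add_neg] using
      fVWmin_le_min_cos (V := V) hW x
  · refine le_ciInf fun α => ?_
    rw [fVW_of_cos_eq_neg_one hx]
    exact min_div_le_one_sub_mul_div hW (abs_cos_le_one α)

lemma fVWmin_eq_min_iff (hV : V ∈ Ioo (0 : ℝ) 1) (hW : W ∈ Ioo (0 : ℝ) 1) :
    fVWmin V W x = min ((1 + V) / (1 + W)) ((1 - V) / (1 - W)) ↔ cos x = -1 :=
  ⟨fun h => by_contra fun hx => (fVWmin_lt_min hV hW hx).ne h,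
    fVWmin_of_cos_eq_neg_one (abs_lt_one_of_mem_Ico (Ioo_subset_Ico_self hW))⟩

lemma isGreatest_range_fVWmin (hV : V ∈ Icc (0 : ℝ) 1) (hW : W ∈ Ico (0 : ℝ) 1) :
    IsGreatest (range (fVWmin V W)) (min ((1 + V) / (1 + W)) ((1 - V) / (1 - W))) :=
  ⟨⟨π, fVWmin_of_cos_eq_neg_one (abs_lt_one_of_mem_Ico hW) cos_pi⟩,
    forall_mem_range.2 (fVWmin_le_min hV hW)⟩

lemma isLeast_range_fVWmin (hV : V ∈ Icc (0 : ℝ) 1) (hW : W ∈ Ico (0 : ℝ) 1) :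
    IsLeast (range (fVWmin V W)) ((1 - V) / (1 + W)) :=
  ⟨⟨0, fVWmin_of_cos_eq_one hV hW cos_zero⟩,
    forall_mem_range.2 (one_sub_div_one_add_le_fVWmin hV hW)⟩

end

/-- For `V, W ∈ (0,1)`:
(i) `f^min_{VW}(x) ≤ M` (`M = (1+V)/(1+W)` if `V ≤ W`, `M = (1−V)/(1−W)` if `V ≥ W`),
with equality iff `x` is an odd multiple of `π`;
(ii) `f^min_{VW}(x) ≥ (1−V)/(1+W)` with equality iff `x` is an even multiple of `π`.
In particular `sup_x f^min_{VW}(x) = M` and `inf_x f^min_{VW}(x) = (1−V)/(1+W)`. -/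
theorem fVWmin_bounds (V W : ℝ)
    (hV : V ∈ Set.Ioo (0 : ℝ) 1) (hW : W ∈ Set.Ioo (0 : ℝ) 1) :
    (∀ x : ℝ, fVWmin V W x ≤ (if V ≤ W then (1 + V) / (1 + W) else (1 - V) / (1 - W))) ∧
    (∀ x : ℝ, fVWmin V W x = (if V ≤ W then (1 + V) / (1 + W) else (1 - V) / (1 - W)) ↔
      ∃ k : ℤ, x = (2 * k + 1) * Real.pi) ∧
    (∀ x : ℝ, (1 - V) / (1 + W) ≤ fVWmin V W x) ∧
    (∀ x : ℝ, fVWmin V W x = (1 - V) / (1 + W) ↔ ∃ k : ℤ, x = 2 * k * Real.pi) ∧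
    (⨆ x : ℝ, fVWmin V W x) =
      (if V ≤ W then (1 + V) / (1 + W) else (1 - V) / (1 - W)) ∧
    (⨅ x : ℝ, fVWmin V W x) = (1 - V) / (1 + W) := by
  have hV' := Set.Ioo_subset_Icc_self hV
  have hW' := Set.Ioo_subset_Ico_self hW
  rw [ite_le_eq_min_div (abs_lt_one_of_mem_Ico hW')]
  exact ⟨fVWmin_le_min hV' hW',
    fun _ => (fVWmin_eq_min_iff hV hW).trans cos_eq_neg_one_iff_exists_odd,
    one_sub_div_one_add_le_fVWmin hV' hW',
    fun _ => (fVWmin_eq_one_sub_div_one_add_iff hV hW).trans cos_eq_one_iff_exists_even,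
    (isGreatest_range_fVWmin hV' hW').csSup_eq,
    (isLeast_range_fVWmin hV' hW').csInf_eq⟩
end

section
/- Let V₁, W₁ ∈ (0,1). Then sup_{β∈ℝ} H^max(β) = (1+V₁)/((1−W₁)(1−V₁)), and this supremum is attained at β if and only if β is an odd multiple of π. Moreover inf_{β∈ℝ} H^min(β) = (1−V₁)/((1−W₁)(1+V₁)) if V₁ ≤ W₁ and inf_{β∈ℝ} H^min(β) = 1/(1+W₁) if V₁ ≥ W₁, and this infimum is attained at β if and only if β is an odd multiple of π. -/
/-- `f^max_{VW}(x) = sup_{α ∈ ℝ} f_{VW}(α, x)`. -/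
noncomputable def fVWmax (V W x : ℝ) : ℝ := ⨆ α : ℝ, fVW V W α x

/-- `H(x, β) = f^max_{V₁W₁}(x)/(1 + V₁·cos(x + β))`. -/
noncomputable def Hfun (V₁ W₁ x β : ℝ) : ℝ :=
    fVWmax V₁ W₁ x / (1 + V₁ * Real.cos (x + β))

/-- `H^max(β) = sup_{x ∈ ℝ} H(x, β)`. -/
noncomputable def Hmax (V₁ W₁ β : ℝ) : ℝ := ⨆ x : ℝ, Hfun V₁ W₁ x β

/-- `H^min(β) = inf_{x ∈ ℝ} H(x, β)`. -/
noncomputable def Hmin (V₁ W₁ β : ℝ) : ℝ := ⨅ x : ℝ, Hfun V₁ W₁ x β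

/-! No closed form of `f^max` is needed, only where it is extremal. A positive fraction is largest
exactly when its numerator is largest and its denominator is smallest, so
`f_{VW}(α, x) ≤ (1 + V)/(1 - W)`, with equality iff `cos (x + α) = cos α = 1`; hence `f^max` is
maximal exactly where `cos x = 1`. If `cos x = -1`, then `f_{VW}(α, x)` is a Möbius function of
`cos α`, extremal at `cos α = ±1`; the test points `α = 0` and `α = -x` show that `f^max` is
strictly larger everywhere else.

The same remark on fractions applied to `H(x, β) = f^max(x)/(1 + V₁ cos (x + β))` says that `H` is
maximal iff `cos x = 1` and `cos (x + β) = -1`, and minimal iff `cos x = -1` and `cos (x + β) = 1`.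
Either system is solvable in `x` iff `cos β = -1`. The suprema and infima are attained because
everything is continuous and `2π`-periodic.
-/

open Real Set

section General

lemma div_eq_div_iff_of_le_of_le {K : Type*} [Field K] [LinearOrder K] [IsStrictOrderedRing K]
    {a b c d : K} (hab : a ≤ b) (hb : 0 < b) (hd : 0 < d) (hdc : d ≤ c) :
    a / c = b / d ↔ a = b ∧ c = d := by
  have hc : 0 < c := hd.trans_le hdc
  rw [div_eq_mul_inv, div_eq_mul_inv,
    mul_eq_mul_iff_eq_and_eq_of_pos' hab (inv_anti₀ hd hdc) hb (inv_pos.2 hc), inv_inj]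

variable {ι α : Type*} [Nonempty ι] [ConditionallyCompleteLinearOrder α] [TopologicalSpace α]
  {f : ι → α} {a : α}

lemma ciSup_eq_iff_exists_of_isCompact_range [ClosedIciTopology α]
    (hf : IsCompact (range f)) (h : ∀ i, f i ≤ a) :
    ⨆ i, f i = a ↔ ∃ i, f i = a := by
  refine ⟨fun hsup => ?_, fun ⟨i, hi⟩ => ?_⟩
  · obtain ⟨i, hi⟩ := hf.sSup_mem (range_nonempty f)
    exact ⟨i, hi.trans hsup⟩
  · exact IsGreatest.csSup_eq ⟨⟨i, hi⟩, forall_mem_range.2 h⟩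

lemma ciInf_eq_iff_exists_of_isCompact_range [ClosedIicTopology α]
    (hf : IsCompact (range f)) (h : ∀ i, a ≤ f i) :
    ⨅ i, f i = a ↔ ∃ i, f i = a :=
  ciSup_eq_iff_exists_of_isCompact_range (α := αᵒᵈ) hf h

end General

section Cosine

lemma cos_add_eq_mul_of_sin_eq_zero {x : ℝ} (h : sin x = 0) (y : ℝ) :
    cos (x + y) = cos x * cos y := by
  rw [cos_add, h, zero_mul, sub_zero]

lemma exists_cos_eq_one_and_cos_add_eq_iff {y c : ℝ} :
    (∃ x, cos x = 1 ∧ cos (x + y) = c) ↔ cos y = c := by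
  refine ⟨fun ⟨x, hx, h⟩ => ?_, fun h => ⟨0, cos_zero, by rwa [zero_add]⟩⟩
  rwa [cos_add_eq_mul_of_sin_eq_zero (sin_eq_zero_iff_cos_eq.2 (.inl hx)), hx, one_mul] at h

lemma exists_cos_eq_neg_one_and_cos_add_eq_iff {y c : ℝ} :
    (∃ x, cos x = -1 ∧ cos (x + y) = c) ↔ cos y = -c := by
  refine ⟨fun ⟨x, hx, h⟩ => ?_, fun h => ⟨π, cos_pi, by rw [add_comm, cos_add_pi, h, neg_neg]⟩⟩
  rw [cos_add_eq_mul_of_sin_eq_zero (sin_eq_zero_iff_cos_eq.2 (.inr hx)), hx] at h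
  linarith

lemma cos_eq_neg_one_iff_exists_odd_mul_pi {x : ℝ} :
    cos x = -1 ↔ ∃ k : ℤ, x = (2 * k + 1) * π := by
  rw [cos_eq_neg_one_iff]
  exact exists_congr fun k => by rw [eq_comm]; ring_nf

lemma one_add_mul_cos_pos {a : ℝ} (ha : |a| < 1) (x : ℝ) : 0 < 1 + a * cos x := by
  have h : |a * cos x| < 1 := by
    rw [abs_mul]
    exact mul_lt_one_of_nonneg_of_lt_one_left (abs_nonneg a) ha (abs_cos_le_one x)
  linarith [neg_lt_of_abs_lt h]

lemma one_sub_mul_cos_pos_s4 {a : ℝ} (ha : |a| < 1) (x : ℝ) : 0 < 1 - a * cos x := by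
  simpa [sub_eq_add_neg] using one_add_mul_cos_pos (a := -a) (by rwa [abs_neg]) x

end Cosine

variable {v w : ℝ}

section fVW

lemma fVW_periodic_left (v w x : ℝ) : Function.Periodic (fun α => fVW v w α x) (2 * π) := by
  intro α
  simp only [fVW, ← add_assoc, cos_add_two_pi]

lemma fVW_periodic_right (v w α : ℝ) : Function.Periodic (fVW v w α) (2 * π) := by
  intro x
  simp only [fVW, add_right_comm x, cos_add_two_pi]

lemma continuous_fVW_s4 (hw : |w| < 1) : Continuous (Function.uncurry fun x α => fVW v w α x) :=
  Continuous.div (by fun_prop) (by fun_prop) fun p => (one_sub_mul_cos_pos_s4 hw p.2).ne'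

lemma isCompact_range_fVW (hw : |w| < 1) (x : ℝ) : IsCompact (range fun α => fVW v w α x) :=
  (fVW_periodic_left v w x).compact_of_continuous two_pi_pos.ne'
    ((continuous_fVW_s4 hw).uncurry_left x)

lemma fVW_le (hv : 0 ≤ v) (hw₀ : 0 ≤ w) (hw : |w| < 1) (α x : ℝ) :
    fVW v w α x ≤ (1 + v) / (1 - w) :=
  div_le_div₀ (by linarith) (by linarith [mul_le_of_le_one_right hv (cos_le_one (x + α))])
    (by linarith [lt_of_abs_lt hw]) (by linarith [mul_le_of_le_one_right hw₀ (cos_le_one α)])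

lemma fVW_eq_iff (hv : 0 < v) (hw₀ : 0 < w) (hw : |w| < 1) (α x : ℝ) :
    fVW v w α x = (1 + v) / (1 - w) ↔ cos (x + α) = 1 ∧ cos α = 1 := by
  rw [fVW, div_eq_div_iff_of_le_of_le
      (by linarith [mul_le_of_le_one_right hv.le (cos_le_one (x + α))]) (by linarith)
      (by linarith [lt_of_abs_lt hw]) (by linarith [mul_le_of_le_one_right hw₀.le (cos_le_one α)]),
    add_right_inj, sub_right_inj, mul_eq_left₀ hv.ne', mul_eq_left₀ hw₀.ne']

end fVW

section fVWmax

lemma fVWmax_periodic (v w : ℝ) : Function.Periodic (fVWmax v w) (2 * π) := fun x =>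
  iSup_congr fun α => fVW_periodic_right v w α x

lemma continuous_fVWmax (hw : |w| < 1) : Continuous (fVWmax v w) := by
  have fVWmax_eq : fVWmax v w = fun x => sSup ((fun α => fVW v w α x) '' Icc 0 (0 + 2 * π)) := by
    funext x
    rw [(fVW_periodic_left v w x).image_Icc two_pi_pos, sSup_range, fVWmax]
  rw [fVWmax_eq]
  exact isCompact_Icc.continuous_sSup (f := fun x α => fVW v w α x) (continuous_fVW_s4 hw)

lemma fVW_le_fVWmax (hw : |w| < 1) (α x : ℝ) : fVW v w α x ≤ fVWmax v w x :=
  le_ciSup (isCompact_range_fVW hw x).bddAbove α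

lemma one_add_mul_cos_div_le_fVWmax (hw : |w| < 1) (x : ℝ) :
    (1 + v * cos x) / (1 - w) ≤ fVWmax v w x := by
  simpa [fVW] using fVW_le_fVWmax (v := v) hw 0 x

lemma one_add_div_le_fVWmax (hw : |w| < 1) (x : ℝ) :
    (1 + v) / (1 - w * cos x) ≤ fVWmax v w x := by
  simpa [fVW] using fVW_le_fVWmax (v := v) hw (-x) x

lemma fVWmax_pos (hv : -1 < v) (hw : |w| < 1) (x : ℝ) : 0 < fVWmax v w x :=
  (div_pos (by linarith) (one_sub_mul_cos_pos_s4 hw x)).trans_le (one_add_div_le_fVWmax hw x)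

lemma fVWmax_le (hv : 0 ≤ v) (hw₀ : 0 ≤ w) (hw : |w| < 1) (x : ℝ) :
    fVWmax v w x ≤ (1 + v) / (1 - w) :=
  ciSup_le fun α => fVW_le hv hw₀ hw α x

lemma fVWmax_eq_iff_cos_eq_one (hv : 0 < v) (hw₀ : 0 < w) (hw : |w| < 1) (x : ℝ) :
    fVWmax v w x = (1 + v) / (1 - w) ↔ cos x = 1 := by
  rw [fVWmax, ciSup_eq_iff_exists_of_isCompact_range (isCompact_range_fVW hw x)
    fun α => fVW_le hv.le hw₀.le hw α x]
  simp only [fVW_eq_iff hv hw₀ hw, add_comm x, and_comm (a := cos (_ + x) = 1)]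
  exact exists_cos_eq_one_and_cos_add_eq_iff

lemma fVWmax_of_cos_eq_neg_one (hw : |w| < 1) {x : ℝ} (hx : cos x = -1) :
    fVWmax v w x = if v ≤ w then (1 - v) / (1 - w) else (1 + v) / (1 + w) := by
  obtain ⟨hw_left, hw_right⟩ := abs_lt.1 hw
  have fVW_eq (α : ℝ) : fVW v w α x = (1 - v * cos α) / (1 - w * cos α) := by
    rw [fVW, cos_add_eq_mul_of_sin_eq_zero (sin_eq_zero_iff_cos_eq.2 (.inr hx)), hx]
    ring_nf
  refine le_antisymm (ciSup_le fun α => ?_) ?_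
  · have hden := one_sub_mul_cos_pos_s4 hw α
    rw [fVW_eq]
    split_ifs with hvw
    · rw [div_le_div_iff₀ hden (by linarith)]
      linarith [mul_nonneg (sub_nonneg.2 hvw) (sub_nonneg.2 (cos_le_one α))]
    · rw [div_le_div_iff₀ hden (by linarith)]
      linarith [mul_nonneg (sub_nonneg.2 (le_of_not_ge hvw))
        (neg_le_iff_add_nonneg.1 (neg_one_le_cos α))]
  · split_ifs
    · simpa [hx, sub_eq_add_neg] using one_add_mul_cos_div_le_fVWmax (v := v) hw x
    · simpa [hx] using one_add_div_le_fVWmax (v := v) hw x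

lemma fVWmax_pi_lt (hv : 0 < v) (hw₀ : 0 < w) (hw : |w| < 1) {x : ℝ} (hx : cos x ≠ -1) :
    fVWmax v w π < fVWmax v w x := by
  have hcos : -1 < cos x := (neg_one_le_cos x).lt_of_ne' hx
  rw [fVWmax_of_cos_eq_neg_one hw cos_pi]
  split_ifs
  · refine lt_of_lt_of_le ?_ (one_add_mul_cos_div_le_fVWmax hw x)
    exact div_lt_div_of_pos_right (by linarith [mul_lt_mul_of_pos_left hcos hv])
      (by linarith [lt_of_abs_lt hw])
  · refine lt_of_lt_of_le ?_ (one_add_div_le_fVWmax hw x)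
    exact div_lt_div_of_pos_left (by linarith) (one_sub_mul_cos_pos_s4 hw x)
      (by linarith [mul_lt_mul_of_pos_left hcos hw₀])

lemma fVWmax_pi_eq_iff_cos_eq_neg_one (hv : 0 < v) (hw₀ : 0 < w) (hw : |w| < 1) (x : ℝ) :
    fVWmax v w π = fVWmax v w x ↔ cos x = -1 := by
  refine ⟨fun h => not_imp_comm.1 (fVWmax_pi_lt hv hw₀ hw) h.not_lt, fun h => ?_⟩
  rw [fVWmax_of_cos_eq_neg_one hw h, fVWmax_of_cos_eq_neg_one hw cos_pi]

lemma fVWmax_pi_le (hv : 0 < v) (hw₀ : 0 < w) (hw : |w| < 1) (x : ℝ) :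
    fVWmax v w π ≤ fVWmax v w x := by
  by_cases hx : cos x = -1
  · exact ((fVWmax_pi_eq_iff_cos_eq_neg_one hv hw₀ hw x).2 hx).le
  · exact (fVWmax_pi_lt hv hw₀ hw hx).le

lemma fVWmax_pi_div_one_add (hv : -1 < v) (hw : |w| < 1) :
    fVWmax v w π / (1 + v) =
      if v ≤ w then (1 - v) / ((1 - w) * (1 + v)) else 1 / (1 + w) := by
  have hv' : 1 + v ≠ 0 := by linarith
  rw [fVWmax_of_cos_eq_neg_one hw cos_pi, ite_div, div_div, div_right_comm, div_self hv']

end fVWmax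

section Hfun

lemma isCompact_range_Hfun (hv : |v| < 1) (hw : |w| < 1) (β : ℝ) :
    IsCompact (range fun x => Hfun v w x β) := by
  have hperiodic : Function.Periodic (fun x => Hfun v w x β) (2 * π) := fun x => by
    simp only [Hfun, fVWmax_periodic v w x, add_right_comm x, cos_add_two_pi]
  exact hperiodic.compact_of_continuous two_pi_pos.ne' <|
    (continuous_fVWmax hw).div (by fun_prop) fun x => (one_add_mul_cos_pos hv (x + β)).ne'

lemma Hfun_le (hv₀ : 0 ≤ v) (hv : |v| < 1) (hw₀ : 0 ≤ w) (hw : |w| < 1) (x β : ℝ) :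
    Hfun v w x β ≤ (1 + v) / (1 - w) / (1 - v) :=
  div_le_div₀ (div_nonneg (by linarith) (by linarith [lt_of_abs_lt hw]))
    (fVWmax_le hv₀ hw₀ hw x) (by linarith [lt_of_abs_lt hv])
    (by linarith [mul_le_mul_of_nonneg_left (neg_one_le_cos (x + β)) hv₀])

lemma Hfun_eq_max_iff (hv₀ : 0 < v) (hv : |v| < 1) (hw₀ : 0 < w) (hw : |w| < 1) (x β : ℝ) :
    Hfun v w x β = (1 + v) / (1 - w) / (1 - v) ↔ cos x = 1 ∧ cos (x + β) = -1 := by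
  rw [Hfun, div_eq_div_iff_of_le_of_le (fVWmax_le hv₀.le hw₀.le hw x)
      (div_pos (by linarith) (by linarith [lt_of_abs_lt hw])) (by linarith [lt_of_abs_lt hv])
      (by linarith [mul_le_mul_of_nonneg_left (neg_one_le_cos (x + β)) hv₀.le]),
    fVWmax_eq_iff_cos_eq_one hv₀ hw₀ hw, sub_eq_add_neg, add_right_inj, ← mul_neg_one,
    mul_right_inj' hv₀.ne']

lemma le_Hfun (hv₀ : 0 < v) (hv : |v| < 1) (hw₀ : 0 < w) (hw : |w| < 1) (x β : ℝ) :
    fVWmax v w π / (1 + v) ≤ Hfun v w x β :=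
  div_le_div₀ (fVWmax_pos (by linarith) hw x).le (fVWmax_pi_le hv₀ hw₀ hw x)
    (one_add_mul_cos_pos hv (x + β))
    (by linarith [mul_le_of_le_one_right hv₀.le (cos_le_one (x + β))])

lemma Hfun_eq_min_iff (hv₀ : 0 < v) (hv : |v| < 1) (hw₀ : 0 < w) (hw : |w| < 1) (x β : ℝ) :
    Hfun v w x β = fVWmax v w π / (1 + v) ↔ cos x = -1 ∧ cos (x + β) = 1 := by
  rw [eq_comm, Hfun, div_eq_div_iff_of_le_of_le (fVWmax_pi_le hv₀ hw₀ hw x)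
      (fVWmax_pos (by linarith) hw x) (one_add_mul_cos_pos hv (x + β))
      (by linarith [mul_le_of_le_one_right hv₀.le (cos_le_one (x + β))]),
    fVWmax_pi_eq_iff_cos_eq_neg_one hv₀ hw₀ hw, add_right_inj, left_eq_mul₀ hv₀.ne']

lemma Hmax_eq_iff_cos_eq_neg_one (hv₀ : 0 < v) (hv : |v| < 1) (hw₀ : 0 < w) (hw : |w| < 1) (β : ℝ) :
    Hmax v w β = (1 + v) / (1 - w) / (1 - v) ↔ cos β = -1 := by
  rw [Hmax, ciSup_eq_iff_exists_of_isCompact_range (isCompact_range_Hfun hv hw β)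
    fun x => Hfun_le hv₀.le hv hw₀.le hw x β]
  simp only [Hfun_eq_max_iff hv₀ hv hw₀ hw, exists_cos_eq_one_and_cos_add_eq_iff]

lemma Hmin_eq_iff_cos_eq_neg_one (hv₀ : 0 < v) (hv : |v| < 1) (hw₀ : 0 < w) (hw : |w| < 1) (β : ℝ) :
    Hmin v w β = fVWmax v w π / (1 + v) ↔ cos β = -1 := by
  rw [Hmin, ciInf_eq_iff_exists_of_isCompact_range (isCompact_range_Hfun hv hw β)
    fun x => le_Hfun hv₀ hv hw₀ hw x β]
  simp only [Hfun_eq_min_iff hv₀ hv hw₀ hw, exists_cos_eq_neg_one_and_cos_add_eq_iff]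

lemma iSup_Hmax (hv₀ : 0 < v) (hv : |v| < 1) (hw₀ : 0 < w) (hw : |w| < 1) :
    ⨆ β, Hmax v w β = (1 + v) / (1 - w) / (1 - v) :=
  IsGreatest.csSup_eq ⟨⟨π, (Hmax_eq_iff_cos_eq_neg_one hv₀ hv hw₀ hw π).2 cos_pi⟩,
    forall_mem_range.2 fun β => ciSup_le fun x => Hfun_le hv₀.le hv hw₀.le hw x β⟩

lemma iInf_Hmin (hv₀ : 0 < v) (hv : |v| < 1) (hw₀ : 0 < w) (hw : |w| < 1) :
    ⨅ β, Hmin v w β = fVWmax v w π / (1 + v) :=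
  IsLeast.csInf_eq ⟨⟨π, (Hmin_eq_iff_cos_eq_neg_one hv₀ hv hw₀ hw π).2 cos_pi⟩,
    forall_mem_range.2 fun β => le_ciInf fun x => le_Hfun hv₀ hv hw₀ hw x β⟩

end Hfun

/-- For `V₁, W₁ ∈ (0,1)`:
`sup_β H^max(β) = (1+V₁)/((1−W₁)(1−V₁))`, attained at `β` iff `β` is an odd
multiple of `π`; and `inf_β H^min(β) = (1−V₁)/((1−W₁)(1+V₁))` if `V₁ ≤ W₁`,
`= 1/(1+W₁)` if `V₁ ≥ W₁`, attained at `β` iff `β` is an odd multiple of `π`. -/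
theorem Hmax_sup_Hmin_inf (V₁ W₁ : ℝ)
    (hV : V₁ ∈ Set.Ioo (0 : ℝ) 1) (hW : W₁ ∈ Set.Ioo (0 : ℝ) 1) :
    (⨆ β : ℝ, Hmax V₁ W₁ β) = (1 + V₁) / ((1 - W₁) * (1 - V₁)) ∧
    (∀ β : ℝ, Hmax V₁ W₁ β = (1 + V₁) / ((1 - W₁) * (1 - V₁)) ↔
      ∃ k : ℤ, β = (2 * k + 1) * Real.pi) ∧
    (⨅ β : ℝ, Hmin V₁ W₁ β) =
      (if V₁ ≤ W₁ then (1 - V₁) / ((1 - W₁) * (1 + V₁)) else 1 / (1 + W₁)) ∧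
    (∀ β : ℝ, Hmin V₁ W₁ β =
        (if V₁ ≤ W₁ then (1 - V₁) / ((1 - W₁) * (1 + V₁)) else 1 / (1 + W₁)) ↔
      ∃ k : ℤ, β = (2 * k + 1) * Real.pi) := by
  obtain ⟨hv₀, hv₁⟩ := hV
  obtain ⟨hw₀, hw₁⟩ := hW
  have hv : |V₁| < 1 := by rwa [abs_of_pos hv₀]
  have hw : |W₁| < 1 := by rwa [abs_of_pos hw₀]
  simp only [← div_div (1 + V₁), ← fVWmax_pi_div_one_add (neg_lt_of_abs_lt hv) hw,
    ← cos_eq_neg_one_iff_exists_odd_mul_pi]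
  exact ⟨iSup_Hmax hv₀ hv hw₀ hw, Hmax_eq_iff_cos_eq_neg_one hv₀ hv hw₀ hw,
    iInf_Hmin hv₀ hv hw₀ hw, Hmin_eq_iff_cos_eq_neg_one hv₀ hv hw₀ hw⟩
end
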